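/- arXiv:2103.03967 — 2 statements merged into one kernel-verified Lean document; each statement's English description precedes it below -/
import Mathlib

section
/- Let m, n ∈ ℕ and let φ : ℕ → ℝ^{m×n} be a matrix kernel with Σ_{k} ‖φ_k‖_F² < ∞ (square-summable Frobenius norms). Let Φ be the associated causal LTI convolution operator, (Φw)_t = Σ_{k=0}^{t} φ_k · w_{t−k}. Then for every w in ℓ¹ₙ, Φw lies in ℓ²ₘ, and the induced ℓ²←ℓ¹ norm of Φ satisfies the exact identity sup { ‖Φw‖₂ : w ∈ ℓ¹ₙ, ‖w‖₁ ≤ 1 } = max_{i ∈ {1,…,n}} √( Σ_{k=0}^{∞} Σ_{j=1}^{m} ((φ_k)_{j,i})² ), i.e., the operator norm equals the largest Frobenius norm among the columns of the stacked kernel. -/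
/-!
By linearity, `Φw = ∑ w_s(i) · r_{s,i}`, where the impulse response `r_{s,i}` is the `i`-th kernel
column delayed by `s` steps. Delays are isometric on `ℓ²`, so for `w ∈ ℓ¹` the series converges
absolutely in the Hilbert space `ℓ²ₘ`. A combination of vectors with coefficients in the unit ball
of `ℓ¹` has norm at most the supremum of their norms, and the unit coefficient sequences show
that this bound is sharp.
-/

/-- The causal LTI convolution operator with matrix kernel `φ`:
`(Φw)_t = Σ_{k=0}^{t} φ_k · w_{t−k}`. -/
def ltiConv {m n : ℕ} (φ : ℕ → Matrix (Fin m) (Fin n) ℝ)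
    (w : ℕ → Fin n → ℝ) (t : ℕ) : Fin m → ℝ :=
  ∑ k ∈ Finset.range (t + 1), (φ k).mulVec (w (t - k))

section AbsoluteCombinations

variable {ι 𝕜 E : Type*} [NormedField 𝕜] [NormedAddCommGroup E] [NormedSpace 𝕜 E]
  {a : ι → 𝕜} {v : ι → E} {M : ℝ}

theorem summable_smul_of_norm_le [CompleteSpace E] (ha : Summable fun i => ‖a i‖)
    (hv : ∀ i, ‖v i‖ ≤ M) : Summable fun i => a i • v i :=
  .of_norm_bounded (ha.mul_right M) fun i => by rw [norm_smul]; gcongr; exact hv i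

theorem norm_tsum_smul_le (ha : Summable fun i => ‖a i‖) (hv : ∀ i, ‖v i‖ ≤ M) :
    ‖∑' i, a i • v i‖ ≤ (∑' i, ‖a i‖) * M :=
  tsum_of_norm_bounded (ha.hasSum.mul_right M) fun i => by rw [norm_smul]; gcongr; exact hv i

theorem sSup_norm_tsum_smul_eq_iSup_norm (hv : BddAbove (Set.range fun i => ‖v i‖)) :
    sSup {r : ℝ | ∃ a : ι → 𝕜, (Summable fun i => ‖a i‖) ∧ ∑' i, ‖a i‖ ≤ 1 ∧
      r = ‖∑' i, a i • v i‖} = ⨆ i, ‖v i‖ := by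
  classical
  have iSup_nonneg : 0 ≤ ⨆ i, ‖v i‖ := Real.iSup_nonneg fun i => norm_nonneg (v i)
  have isUpperBound : ∀ r ∈ {r : ℝ | ∃ a : ι → 𝕜, (Summable fun i => ‖a i‖) ∧
      ∑' i, ‖a i‖ ≤ 1 ∧ r = ‖∑' i, a i • v i‖}, r ≤ ⨆ i, ‖v i‖ := by
    rintro _ ⟨a, ha, ha_le, rfl⟩
    exact (norm_tsum_smul_le ha (le_ciSup hv)).trans (mul_le_of_le_one_left iSup_nonneg ha_le)
  refine le_antisymm (Real.sSup_le isUpperBound iSup_nonneg)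
    (Real.iSup_le (fun i => le_csSup ⟨_, isUpperBound⟩ ⟨Pi.single i 1, ?_, ?_, ?_⟩)
      (Real.sSup_nonneg ?_))
  · exact summable_of_ne_finset_zero (s := {i}) fun k hk => by simp_all
  · rw [tsum_eq_single i fun k hk => by simp [hk]]
    simp
  · rw [tsum_eq_single i fun k hk => by simp [hk]]
    simp
  · rintro _ ⟨a, -, -, rfl⟩
    exact norm_nonneg _

end AbsoluteCombinations

section SequenceSpaces

open scoped ENNReal

variable {α β E : Type*} [NormedAddCommGroup E] {p : ℝ≥0∞} {e : α → β}

theorem norm_extend_zero_rpow (hp : 0 < p.toReal) (f : α → E) (b : β) :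
    ‖Function.extend e f 0 b‖ ^ p.toReal =
      Function.extend e (fun a => ‖f a‖ ^ p.toReal) 0 b := by
  rw [Function.apply_extend fun x : E => ‖x‖ ^ p.toReal]
  congr 1
  funext
  simp [Real.zero_rpow hp.ne']

theorem memℓp_extend_zero_iff (hp : 0 < p.toReal) (he : e.Injective) {f : α → E} :
    Memℓp (Function.extend e f 0) p ↔ Memℓp f p := by
  simp only [memℓp_gen_iff hp, norm_extend_zero_rpow hp, summable_extend_zero he]

theorem lp_norm_eq_of_coeFn_eq_extend_zero (hp : 0 < p.toReal) (he : e.Injective)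
    {f : lp (fun _ : α => E) p} {g : lp (fun _ : β => E) p}
    (hg : ⇑g = Function.extend e f 0) : ‖g‖ = ‖f‖ := by
  simp only [lp.norm_eq_tsum_rpow hp, hg, norm_extend_zero_rpow hp, tsum_extend_zero he]

theorem lp_coeFn_tsum_apply {ι : Type*} {E : α → Type*} [∀ i, NormedAddCommGroup (E i)]
    [Fact (1 ≤ p)] {F : ι → lp E p} (hF : Summable F) (i : α) :
    (∑' k, F k) i = ∑' k, F k i :=
  hF.map_tsum ((Pi.evalAddMonoidHom E i).comp (lp E p).subtype)
    (lp.lipschitzWith_one_eval p i).continuous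

variable {κ : Type*} [Fintype κ]

theorem memℓp_two_euclideanSpace_iff {f : α → EuclideanSpace ℝ κ} :
    Memℓp f 2 ↔ Summable fun t => ∑ j, f t j ^ 2 := by
  simp [memℓp_gen_iff, EuclideanSpace.real_norm_sq_eq]

theorem lp_two_norm_euclideanSpace_eq (f : lp (fun _ : α => EuclideanSpace ℝ κ) 2) :
    ‖f‖ = √(∑' t, ∑ j, f t j ^ 2) := by
  simp [lp.norm_eq_tsum_rpow, EuclideanSpace.real_norm_sq_eq, Real.sqrt_eq_rpow]

end SequenceSpaces

section ImpulseResponse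

variable {m n : ℕ} {φ : ℕ → Matrix (Fin m) (Fin n) ℝ}

/-- The `i`-th column `k ↦ φ_k e_i` of the stacked kernel. Its values lie in `EuclideanSpace`, so
that its `ℓ²` norm is the Frobenius norm of the column. -/
def kernelColumn (φ : ℕ → Matrix (Fin m) (Fin n) ℝ) (i : Fin n) (k : ℕ) :
    EuclideanSpace ℝ (Fin m) :=
  WithLp.toLp 2 ((φ k).col i)

theorem memℓp_kernelColumn (hφ : Summable fun k => ∑ j : Fin m, ∑ i : Fin n, φ k j i ^ 2)
    (i : Fin n) : Memℓp (kernelColumn φ i) 2 :=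
  memℓp_two_euclideanSpace_iff.2 <| hφ.of_nonneg_of_le (fun _ => by positivity) fun _ =>
    Finset.sum_le_sum fun j _ =>
      Finset.single_le_sum (f := fun i => φ _ j i ^ 2) (fun _ _ => sq_nonneg _) (Finset.mem_univ i)

/-- The response in `ℓ²ₘ` of the convolution operator to a unit impulse in channel `q.2` at time
`q.1`: the column `q.2` of the kernel delayed by `q.1` steps. The delay is encoded as the extension
by zero along `k ↦ k + q.1`. -/
noncomputable def impulseResponse (hφ : ∀ i, Memℓp (kernelColumn φ i) 2) (q : ℕ × Fin n) :
    lp (fun _ : ℕ => EuclideanSpace ℝ (Fin m)) 2 :=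
  ⟨Function.extend (· + q.1) (kernelColumn φ q.2) 0,
    (memℓp_extend_zero_iff (by simp) (add_left_injective q.1)).2 (hφ q.2)⟩

variable (hφ : ∀ i, Memℓp (kernelColumn φ i) 2)

theorem impulseResponse_apply_of_le {s t : ℕ} (hst : s ≤ t) (i : Fin n) :
    impulseResponse hφ (s, i) t = kernelColumn φ i (t - s) := by
  have := (add_left_injective s).extend_apply (kernelColumn φ i) 0 (t - s)
  rwa [Nat.sub_add_cancel hst] at this

theorem impulseResponse_apply_of_lt {s t : ℕ} (hts : t < s) (i : Fin n) :
    impulseResponse hφ (s, i) t = 0 :=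
  Function.extend_apply' _ _ _ fun ⟨_, hk⟩ => (hts.trans_le (Nat.le_add_left s _)).ne' hk

theorem norm_impulseResponse (q : ℕ × Fin n) :
    ‖impulseResponse hφ q‖ = √(∑' k, ∑ j, φ k j q.2 ^ 2) :=
  (lp_norm_eq_of_coeFn_eq_extend_zero (f := ⟨kernelColumn φ q.2, hφ q.2⟩) (by simp)
    (add_left_injective q.1) rfl).trans (lp_two_norm_euclideanSpace_eq _)

theorem finite_range_norm_impulseResponse :
    (Set.range fun q => ‖impulseResponse hφ q‖).Finite := by
  simp only [norm_impulseResponse]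
  exact (Set.finite_range fun i : Fin n => √(∑' k, ∑ j, φ k j i ^ 2)).subset <|
    Set.range_subset_iff.2 fun q => ⟨q.2, rfl⟩

theorem iSup_norm_impulseResponse :
    ⨆ q, ‖impulseResponse hφ q‖ = ⨆ i : Fin n, √(∑' k, ∑ j, φ k j i ^ 2) := by
  simp only [norm_impulseResponse]
  exact Prod.snd_surjective.iSup_comp fun i : Fin n => √(∑' k, ∑ j, φ k j i ^ 2)

theorem toLp_ltiConv_eq_sum (φ : ℕ → Matrix (Fin m) (Fin n) ℝ) (w : ℕ → Fin n → ℝ) (t : ℕ) :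
    WithLp.toLp 2 (ltiConv φ w t) =
      ∑ s ∈ Finset.range (t + 1), ∑ i, w s i • kernelColumn φ i (t - s) := by
  rw [ltiConv, ← Finset.sum_range_reflect, WithLp.toLp_sum]
  refine Finset.sum_congr rfl fun s hs => ?_
  have hst : s ≤ t := Finset.mem_range_succ_iff.1 hs
  ext j
  simp [kernelColumn, Matrix.mulVec, dotProduct, Nat.sub_sub_self hst, mul_comm]

theorem toLp_ltiConv_eq_tsum_smul_impulseResponse (w : ℕ → Fin n → ℝ) (t : ℕ) :
    WithLp.toLp 2 (ltiConv φ w t) = ∑' q : ℕ × Fin n, w q.1 q.2 • impulseResponse hφ q t := by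
  have eq_zero_of_notMem : ∀ q ∉ Finset.range (t + 1) ×ˢ (Finset.univ : Finset (Fin n)),
      w q.1 q.2 • impulseResponse hφ q t = 0 := by
    rintro ⟨s, i⟩ hq
    rw [impulseResponse_apply_of_lt hφ (by simpa using hq), smul_zero]
  rw [tsum_eq_sum eq_zero_of_notMem, Finset.sum_product, toLp_ltiConv_eq_sum]
  refine Finset.sum_congr rfl fun s hs => Finset.sum_congr rfl fun i _ => ?_
  rw [impulseResponse_apply_of_le hφ (Finset.mem_range_succ_iff.1 hs)]

variable {w : ℕ → Fin n → ℝ}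

theorem coeFn_tsum_smul_impulseResponse (hw : Summable fun q : ℕ × Fin n => |w q.1 q.2|) :
    ⇑(∑' q : ℕ × Fin n, w q.1 q.2 • impulseResponse hφ q) =
      fun t => WithLp.toLp 2 (ltiConv φ w t) := by
  have hsum : Summable fun q : ℕ × Fin n => w q.1 q.2 • impulseResponse hφ q :=
    summable_smul_of_norm_le hw (le_ciSup (finite_range_norm_impulseResponse hφ).bddAbove)
  funext t
  rw [lp_coeFn_tsum_apply hsum, toLp_ltiConv_eq_tsum_smul_impulseResponse hφ]
  rfl

theorem memℓp_ltiConv (hφ : ∀ i, Memℓp (kernelColumn φ i) 2)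
    (hw : Summable fun q : ℕ × Fin n => |w q.1 q.2|) :
    Memℓp (fun t => WithLp.toLp 2 (ltiConv φ w t)) 2 := by
  rw [← coeFn_tsum_smul_impulseResponse hφ hw]
  exact lp.memℓp _

theorem norm_tsum_smul_impulseResponse (hw : Summable fun q : ℕ × Fin n => |w q.1 q.2|) :
    ‖∑' q : ℕ × Fin n, w q.1 q.2 • impulseResponse hφ q‖ =
      √(∑' t, ∑ j, ltiConv φ w t j ^ 2) := by
  rw [lp_two_norm_euclideanSpace_eq, coeFn_tsum_smul_impulseResponse hφ hw]

end ImpulseResponse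

/-- Lemma 2: for a causal LTI convolution operator `Φ` with
square-summable kernel, `Φ` maps `ℓ¹ₙ` into `ℓ²ₘ` and its induced `ℓ²←ℓ¹` norm
equals the largest Frobenius norm among the columns of the stacked kernel. -/
theorem lti_two_from_one_norm
    (m n : ℕ) (φ : ℕ → Matrix (Fin m) (Fin n) ℝ)
    (hφ : Summable fun k => ∑ j : Fin m, ∑ i : Fin n, (φ k j i) ^ 2) :
    (∀ w : ℕ → Fin n → ℝ,
      Summable (fun p : ℕ × Fin n => |w p.1 p.2|) →
      Summable (fun t => ∑ j : Fin m, (ltiConv φ w t j) ^ 2)) ∧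
    sSup {r : ℝ | ∃ w : ℕ → Fin n → ℝ,
        Summable (fun p : ℕ × Fin n => |w p.1 p.2|) ∧
        (∑' p : ℕ × Fin n, |w p.1 p.2|) ≤ 1 ∧
        r = Real.sqrt (∑' t : ℕ, ∑ j : Fin m, (ltiConv φ w t j) ^ 2)} =
      ⨆ i : Fin n, Real.sqrt (∑' k : ℕ, ∑ j : Fin m, (φ k j i) ^ 2) := by
  have hcol := memℓp_kernelColumn hφ
  refine ⟨fun w hw => by simpa using memℓp_two_euclideanSpace_iff.1 (memℓp_ltiConv hcol hw), ?_⟩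
  rw [← iSup_norm_impulseResponse hcol, ← sSup_norm_tsum_smul_eq_iSup_norm (𝕜 := ℝ)
    (finite_range_norm_impulseResponse hcol).bddAbove]
  congr 1
  ext r
  rw [Set.mem_ofPred_eq, Set.mem_ofPred_eq, (Equiv.curry ℕ (Fin n) ℝ).symm.exists_congr_left]
  refine exists_congr fun w => and_congr_right fun hw => and_congr_right fun _ => ?_
  rw [← norm_tsum_smul_impulseResponse hcol hw]
  rfl
end

section
/- Let m, n ∈ ℕ and let φ : ℕ → ℝ^{m×n} be a matrix kernel with Σ_{k} ‖φ_k‖_F² < ∞. Let Φ be the associated causal LTI convolution operator, (Φw)_t = Σ_{k=0}^{t} φ_k · w_{t−k}, and set c := max_{i ∈ {1,…,n}} √( Σ_{k=0}^{∞} Σ_{j=1}^{m} ((φ_k)_{j,i})² ). Then for every w ∈ ℓ¹ₙ the output sequence Φw lies in ℓ²ₘ and satisfies ‖Φw‖₂ ≤ c · ‖w‖₁. -/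
/-!
By linearity and time invariance, `Φw` is the superposition over times `s` and inputs `i` of the
response to a Dirac input, which is the `i`-th column of the kernel delayed by `s`, weighted by
`w_s(i)`. A delay preserves the `ℓ²` norm, so the triangle inequality bounds every finite partial
superposition by `c · ‖w‖₁`. At each time only finitely many terms of the superposition are nonzero,
so the partial superpositions converge pointwise to `Φw`, and balls of `ℓ²` are closed under
pointwise limits.
-/

open Filter Function
open scoped ENNReal Topology

section ExtendByZero

variable {α β E : Type*} [NormedAddCommGroup E] {p : ℝ≥0∞} {e : α → β}

theorem norm_rpow_extend_zero {r : ℝ} (hr : r ≠ 0) (a : α → E) :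
    (fun b => ‖extend e a 0 b‖ ^ r) = extend e (fun k => ‖a k‖ ^ r) 0 := by
  funext b
  rw [apply_extend (fun x : E => ‖x‖ ^ r)]
  congr 1
  funext
  simp [Real.zero_rpow hr]

theorem norm_extend_zero_le {a : α → E} {C : ℝ} (hC : 0 ≤ C) (ha : ∀ k, ‖a k‖ ≤ C) (b : β) :
    ‖extend e a 0 b‖ ≤ C := by
  classical
  rw [extend_def]
  split_ifs
  · exact ha _
  · simpa only [Pi.zero_apply, norm_zero] using hC

theorem memℓp_extend_zero (he : Injective e) {a : α → E} (ha : Memℓp a p) :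
    Memℓp (extend e a 0) p := by
  rcases p.trichotomy with rfl | rfl | hp
  · refine memℓp_zero (((memℓp_zero_iff.1 ha).image e).subset fun b hb => ?_)
    obtain ⟨k, rfl⟩ : ∃ k, e k = b := by
      by_contra not_range
      exact hb (extend_apply' a (0 : β → E) b not_range)
    exact ⟨k, by simpa only [Set.mem_ofPred_eq, he.extend_apply] using hb, rfl⟩
  · refine memℓp_infty ⟨‖(⟨a, ha⟩ : lp (fun _ : α => E) ∞)‖, ?_⟩
    rintro _ ⟨b, rfl⟩
    exact norm_extend_zero_le (norm_nonneg _)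
      (lp.norm_apply_le_norm ENNReal.top_ne_zero ⟨a, ha⟩) b
  · rwa [memℓp_gen_iff hp, norm_rpow_extend_zero hp.ne', summable_extend_zero he,
      ← memℓp_gen_iff hp]

/-- Extension by zero along an injection, as a map between `ℓᵖ` spaces. For `e = (· + s)` on `ℕ`
this is the delay by `s` time steps. -/
noncomputable def lpExtendZero (he : Injective e) (a : lp (fun _ : α => E) p) :
    lp (fun _ : β => E) p :=
  ⟨extend e a 0, memℓp_extend_zero he (lp.memℓp a)⟩

theorem norm_lpExtendZero (hp : p ≠ 0) (he : Injective e) (a : lp (fun _ : α => E) p) :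
    ‖lpExtendZero he a‖ = ‖a‖ := by
  rcases p.trichotomy with rfl | rfl | hp₀
  · exact absurd rfl hp
  · refine le_antisymm (lp.norm_le_of_forall_le (norm_nonneg a) <|
      norm_extend_zero_le (norm_nonneg a) (lp.norm_apply_le_norm hp a))
      (lp.norm_le_of_forall_le (norm_nonneg _) fun k => ?_)
    simpa only [lpExtendZero, he.extend_apply] using
      lp.norm_apply_le_norm hp (lpExtendZero he a) (e k)
  · rw [lp.norm_eq_tsum_rpow hp₀, lp.norm_eq_tsum_rpow hp₀, lpExtendZero,
      norm_rpow_extend_zero hp₀.ne', tsum_extend_zero he]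

end ExtendByZero

section Superposition

variable {ι κ 𝕜 : Type*} [NormedField 𝕜] {p : ℝ≥0∞} [Fact (1 ≤ p)]

theorem norm_sum_smul_le_mul_tsum {G : Type*} [SeminormedAddCommGroup G] [NormedSpace 𝕜 G]
    {w : ι → 𝕜} {v : ι → G} {c : ℝ} (hw : Summable fun i => ‖w i‖) (hv : ∀ i, ‖v i‖ ≤ c)
    (s : Finset ι) : ‖∑ i ∈ s, w i • v i‖ ≤ c * ∑' i, ‖w i‖ := by
  have norm_term_le (i : ι) : ‖w i • v i‖ ≤ c * ‖w i‖ := by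
    rw [norm_smul, mul_comm]
    gcongr
    exact hv i
  calc ‖∑ i ∈ s, w i • v i‖
      ≤ ∑ i ∈ s, c * ‖w i‖ := norm_sum_le_of_le s fun i _ => norm_term_le i
    _ ≤ ∑' i, c * ‖w i‖ :=
      (hw.mul_left c).sum_le_tsum s fun i _ => (norm_nonneg _).trans (norm_term_le i)
    _ = c * ∑' i, ‖w i‖ := tsum_mul_left

theorem exists_lp_norm_le_of_hasSum_smul {E : κ → Type*} [∀ k, NormedAddCommGroup (E k)]
    [∀ k, NormedSpace 𝕜 (E k)] {w : ι → 𝕜} {v : ι → lp E p} {y : ∀ k, E k} {c : ℝ}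
    (hw : Summable fun i => ‖w i‖) (hv : ∀ i, ‖v i‖ ≤ c)
    (hy : ∀ k, HasSum (fun i => w i • v i k) (y k)) :
    ∃ f : lp E p, ⇑f = y ∧ ‖f‖ ≤ c * ∑' i, ‖w i‖ := by
  have partialSum_le := norm_sum_smul_le_mul_tsum hw hv
  have tendsto_y : Tendsto (fun s : Finset ι => ⇑(∑ i ∈ s, w i • v i)) atTop (𝓝 y) := by
    rw [tendsto_pi_nhds]
    intro k
    simp only [lp.coeFn_sum, lp.coeFn_smul, Finset.sum_apply, Pi.smul_apply]
    exact hy k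
  have mem_y : Memℓp y p := lp.memℓp_of_tendsto
    (isBounded_iff_forall_norm_le.2 ⟨_, Set.forall_mem_range.2 partialSum_le⟩) tendsto_y
  exact ⟨⟨y, mem_y⟩, rfl, lp.norm_le_of_tendsto (.of_forall partialSum_le) tendsto_y⟩

end Superposition

section CausalConvolution

variable {ι 𝕜 E : Type*} [Fintype ι]

theorem hasSum_smul_extend_add [AddCommMonoid E] [SMulZeroClass 𝕜 E] [TopologicalSpace E]
    (a : ι → ℕ → E) (w : ℕ → ι → 𝕜) (t : ℕ) :
    HasSum (fun q : ℕ × ι => w q.1 q.2 • extend (· + q.1) (a q.2) 0 t)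
      (∑ k ∈ Finset.range (t + 1), ∑ i, w (t - k) i • a i k) := by
  have term_eq_zero : ∀ q ∉ Finset.range (t + 1) ×ˢ (Finset.univ : Finset ι),
      w q.1 q.2 • extend (· + q.1) (a q.2) 0 t = 0 := by
    intro q hq
    have not_reached : ¬∃ k, k + q.1 = t := by
      rintro ⟨k, rfl⟩
      simp at hq
    rw [extend_apply' _ _ _ not_reached, Pi.zero_apply, smul_zero]
  convert (hasSum_sum_of_ne_finset_zero term_eq_zero :
    HasSum (fun q : ℕ × ι => w q.1 q.2 • extend (· + q.1) (a q.2) 0 t) _) using 1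
  rw [Finset.sum_product, ← Finset.sum_range_reflect]
  refine Finset.sum_congr rfl fun s hs => Finset.sum_congr rfl fun i _ => ?_
  obtain ⟨k, rfl⟩ := Nat.exists_eq_add_of_le' (Finset.mem_range_succ_iff.1 hs)
  simp only [Nat.add_sub_cancel, Nat.add_sub_cancel_left, (add_left_injective s).extend_apply]

theorem exists_lp_norm_causalConv_le [NormedField 𝕜] [NormedAddCommGroup E] [NormedSpace 𝕜 E]
    {p : ℝ≥0∞} [Fact (1 ≤ p)] {a : ι → lp (fun _ : ℕ => E) p} {c : ℝ}
    (ha : ∀ i, ‖a i‖ ≤ c) {w : ℕ → ι → 𝕜} (hw : Summable fun q : ℕ × ι => ‖w q.1 q.2‖) :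
    ∃ f : lp (fun _ : ℕ => E) p,
      (∀ t, f t = ∑ k ∈ Finset.range (t + 1), ∑ i, w (t - k) i • a i k) ∧
        ‖f‖ ≤ c * ∑' q : ℕ × ι, ‖w q.1 q.2‖ := by
  have hp : p ≠ 0 := (zero_lt_one.trans_le Fact.out).ne'
  obtain ⟨f, hf, norm_f⟩ := exists_lp_norm_le_of_hasSum_smul (w := fun q : ℕ × ι => w q.1 q.2) hw
    (v := fun q : ℕ × ι => lpExtendZero (add_left_injective q.1) (a q.2))
    (fun q => (norm_lpExtendZero hp _ _).trans_le (ha q.2))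
    (hasSum_smul_extend_add (fun i => ⇑(a i)) w)
  exact ⟨f, congrFun hf, norm_f⟩

end CausalConvolution

section EuclideanSequences

variable {α ι : Type*} [Fintype ι]

theorem memℓp_two_toLp_iff {y : α → ι → ℝ} :
    Memℓp (fun t => WithLp.toLp 2 (y t)) 2 ↔ Summable fun t => ∑ j, y t j ^ 2 := by
  simp [memℓp_gen_iff, EuclideanSpace.real_norm_sq_eq]

theorem lp_two_norm_eq_sqrt (f : lp (fun _ : α => EuclideanSpace ℝ ι) 2) :
    ‖f‖ = √(∑' t, ∑ j, f t j ^ 2) := by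
  simp [lp.norm_eq_tsum_rpow, EuclideanSpace.real_norm_sq_eq, Real.sqrt_eq_rpow]

end EuclideanSequences

section Kernel

theorem toLp_ltiConv {m n : ℕ} (φ : ℕ → Matrix (Fin m) (Fin n) ℝ) (w : ℕ → Fin n → ℝ) (t : ℕ) :
    WithLp.toLp 2 (ltiConv φ w t) =
      ∑ k ∈ Finset.range (t + 1), ∑ i, w (t - k) i • WithLp.toLp 2 ((φ k).col i) := by
  ext j
  simp [ltiConv, Matrix.mulVec, dotProduct, mul_comm]

theorem summable_sum_col_sq {α κ ι : Type*} [Fintype κ] [Fintype ι] {φ : α → Matrix κ ι ℝ}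
    (hφ : Summable fun k => ∑ j, ∑ i, φ k j i ^ 2) (i : ι) :
    Summable fun k => ∑ j, φ k j i ^ 2 := by
  refine hφ.of_nonneg_of_le (fun k => by positivity) fun k => ?_
  gcongr with j
  exact Finset.single_le_sum (f := fun i => φ k j i ^ 2) (fun i _ => sq_nonneg _)
    (Finset.mem_univ i)

end Kernel

/-- upper-bound direction of Lemma 2: for a causal LTI convolution
operator `Φ` with square-summable kernel and
`c := max_i √(Σ_k Σ_j ((φ_k)_{j,i})²)`, every `w ∈ ℓ¹ₙ` gives `Φw ∈ ℓ²ₘ` with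
`‖Φw‖₂ ≤ c · ‖w‖₁`. -/
theorem lti_two_from_one_bound
    (m n : ℕ) (φ : ℕ → Matrix (Fin m) (Fin n) ℝ)
    (hφ : Summable fun k => ∑ j : Fin m, ∑ i : Fin n, (φ k j i) ^ 2)
    (c : ℝ)
    (hc : c = ⨆ i : Fin n, Real.sqrt (∑' k : ℕ, ∑ j : Fin m, (φ k j i) ^ 2)) :
    ∀ w : ℕ → Fin n → ℝ,
      Summable (fun p : ℕ × Fin n => |w p.1 p.2|) →
      Summable (fun t => ∑ j : Fin m, (ltiConv φ w t j) ^ 2) ∧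
      Real.sqrt (∑' t : ℕ, ∑ j : Fin m, (ltiConv φ w t j) ^ 2) ≤
        c * ∑' p : ℕ × Fin n, |w p.1 p.2| := by
  intro w hw
  let col (i : Fin n) : lp (fun _ : ℕ => EuclideanSpace ℝ (Fin m)) 2 :=
    ⟨fun k => WithLp.toLp 2 ((φ k).col i), memℓp_two_toLp_iff.2 (summable_sum_col_sq hφ i)⟩
  have norm_col_le (i : Fin n) : ‖col i‖ ≤ c := by
    rw [lp_two_norm_eq_sqrt, hc]
    exact le_ciSup (f := fun i => √(∑' k, ∑ j, φ k j i ^ 2)) (Set.finite_range _).bddAbove i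
  obtain ⟨f, hf, norm_f⟩ := exists_lp_norm_causalConv_le norm_col_le (w := w) hw
  have f_eq : ⇑f = fun t => WithLp.toLp 2 (ltiConv φ w t) :=
    funext fun t => (hf t).trans (toLp_ltiConv φ w t).symm
  refine ⟨memℓp_two_toLp_iff.1 (f_eq ▸ lp.memℓp f), ?_⟩
  rw [lp_two_norm_eq_sqrt, f_eq] at norm_f
  exact norm_f
end
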